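/- Let Γ be a group with a finite symmetric generating set and word norm ‖·‖, acting on a metric space X by isometries, and suppose the action is bounded: there is B : Γ → [0,∞) with d(x, γ·x) ≤ B(γ) for all γ and x. Let b : X → X^bdd be the map b(x) = [x, e]. Then: (i) d^bdd(b(x₁), b(x₂)) ≤ d(x₁, x₂) for all x₁, x₂ ∈ X; and (ii) for every D ≥ 0, if d^bdd(b(x₁), b(x₂)) ≤ D then d(x₁, x₂) ≤ D + B_*(D), where B_*(D) = max{ B(γ) : ‖γ‖ ≤ D }. In particular, b is a coarse map. -/

import Mathlib

/-!
Taking `g = 1` in the infimum defining `dbdd` shows that `b` is distance nonincreasing.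
Conversely, if the infimum is at most `D`, then for every small `ε > 0` some `g` satisfies
`d(x₁, g x₂) < D + ε` and `‖g‖ < D + ε`. The word norm is integer valued, so once
`D + ε ≤ ⌊D⌋ + 1` the second inequality forces `‖g‖ ≤ D`, whence
`d(x₁, x₂) ≤ d(x₁, g x₂) + d(g x₂, x₂) ≤ D + ε + B_*(D)`; then let `ε → 0`.
The supremum `B_*(D)` is a genuine one because balls of the word metric are finite
(`finite_wordNorm_le`).
-/

/-- The word norm of `γ` with respect to a generating set `Ω`: the least length of a
word in elements of `Ω` whose product is `γ`. -/
noncomputable def wordNorm {Γ : Type*} [Group Γ] (Ω : Finset Γ) (γ : Γ) : ℕ :=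
  sInf {n | ∃ l : List Γ, (∀ x ∈ l, x ∈ Ω) ∧ l.length = n ∧ l.prod = γ}

/-- The orbit pseudo-distance on `X^bdd = (X × Γ)/Γ` for the diagonal action,
computed on representatives. -/
noncomputable def dbdd {Γ X : Type*} [Group Γ] [MetricSpace X] [MulAction Γ X]
    (Ω : Finset Γ) (p q : X × Γ) : ℝ :=
  ⨅ g : Γ, max (dist p.1 (g • q.1)) ((wordNorm Ω (p.2⁻¹ * (g * q.2)) : ℝ))

/-- The infimum defining `wordNorm` is attained; in particular it is not the junk value
`sInf ∅ = 0`. -/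
theorem exists_word {Γ : Type*} [Group Γ] (Ω : Finset Γ)
    (hsymm : ∀ ω ∈ Ω, ω⁻¹ ∈ Ω) (hgen : Subgroup.closure (Ω : Set Γ) = ⊤) (γ : Γ) :
    ∃ l : List Γ, (∀ x ∈ l, x ∈ Ω) ∧ l.length = wordNorm Ω γ ∧ l.prod = γ := by
  have hγ : γ ∈ (Subgroup.closure (Ω : Set Γ)).toSubmonoid := by simp [hgen]
  rw [Subgroup.closure_toSubmonoid] at hγ
  obtain ⟨l, hl, hp⟩ := Submonoid.exists_list_of_mem_closure hγ
  refine Nat.sInf_mem (s := {n | ∃ l : List Γ, (∀ x ∈ l, x ∈ Ω) ∧ l.length = n ∧ l.prod = γ})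
    ⟨l.length, l, fun x hx => ?_, rfl, hp⟩
  rcases hl x hx with h | h
  · exact h
  · simpa using hsymm _ h

theorem wordNorm_one {Γ : Type*} [Group Γ] (Ω : Finset Γ) : wordNorm Ω (1 : Γ) = 0 :=
  Nat.sInf_eq_zero.2 (Or.inl ⟨[], by simp, rfl, rfl⟩)

/-- Balls of the word metric are finite: a ball is covered by the products of the finitely
many words of bounded length. -/
theorem finite_wordNorm_le {Γ : Type*} [Group Γ] (Ω : Finset Γ)
    (hsymm : ∀ ω ∈ Ω, ω⁻¹ ∈ Ω) (hgen : Subgroup.closure (Ω : Set Γ) = ⊤)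
    {D : ℝ} (hD : 0 ≤ D) : {γ : Γ | (wordNorm Ω γ : ℝ) ≤ D}.Finite := by
  refine ((List.finite_length_le Ω ⌊D⌋₊).image
    fun l => (l.map (Subtype.val : Ω → Γ)).prod).subset fun γ hγ => ?_
  obtain ⟨l, hl, hlen, hp⟩ := exists_word Ω hsymm hgen γ
  lift l to List Ω using hl
  refine ⟨l, ?_, hp⟩
  rw [List.length_map] at hlen
  rw [Set.mem_ofPred_eq, hlen]
  exact (Nat.le_floor_iff hD).2 hγ

/-- For a bounded isometric action of a finitely generated group `Γ` on `X`, the map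
`b(x) = [x,e] : X → X^bdd` satisfies: (i) it is distance nonincreasing; (ii) if
`d^bdd(b x₁, b x₂) ≤ D` then `d(x₁,x₂) ≤ D + B_*(D)` where
`B_*(D) = sup { B γ : ‖γ‖ ≤ D }`; in particular `b` is a coarse map. -/
theorem b_is_coarse
    {Γ X : Type*} [Group Γ] [MetricSpace X] [MulAction Γ X]
    (Ω : Finset Γ)
    (hsymm : ∀ ω ∈ Ω, ω⁻¹ ∈ Ω)
    (hgen : Subgroup.closure (Ω : Set Γ) = ⊤)
    (hiso : ∀ γ : Γ, Isometry (fun x : X => γ • x))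
    (B : Γ → ℝ) (hB0 : ∀ γ : Γ, 0 ≤ B γ)
    (hB : ∀ (γ : Γ) (x : X), dist x (γ • x) ≤ B γ) :
    (∀ x₁ x₂ : X, dbdd Ω (x₁, (1 : Γ)) (x₂, (1 : Γ)) ≤ dist x₁ x₂) ∧
    (∀ D : ℝ, 0 ≤ D → ∀ x₁ x₂ : X, dbdd Ω (x₁, (1 : Γ)) (x₂, (1 : Γ)) ≤ D →
      dist x₁ x₂ ≤ D + sSup (B '' {γ : Γ | (wordNorm Ω γ : ℝ) ≤ D})) ∧
    ((∃ l : ℝ → ℝ, ∀ (r : ℝ) (x₁ x₂ : X), dist x₁ x₂ ≤ r →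
        dbdd Ω (x₁, (1 : Γ)) (x₂, (1 : Γ)) ≤ l r) ∧
      (∀ D : ℝ, 0 ≤ D → ∃ C : ℝ, ∀ x₁ x₂ : X,
        dbdd Ω (x₁, (1 : Γ)) (x₂, (1 : Γ)) ≤ D → dist x₁ x₂ ≤ C)) := by
  have key : ∀ D : ℝ, 0 ≤ D → ∀ x₁ x₂ : X, dbdd Ω (x₁, (1 : Γ)) (x₂, (1 : Γ)) ≤ D →
      dist x₁ x₂ ≤ D + sSup (B '' {γ : Γ | (wordNorm Ω γ : ℝ) ≤ D}) := by
    intro D hD x₁ x₂ h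
    have hbdd := ((finite_wordNorm_le Ω hsymm hgen hD).image B).bddAbove
    refine le_of_forall_pos_le_add fun ε hε => ?_
    -- Below `⌊D⌋ + 1` the integer-valued norm cannot exceed `D`.
    have hlt : dbdd Ω (x₁, (1 : Γ)) (x₂, (1 : Γ)) < min (D + ε) (⌊D⌋₊ + 1) :=
      h.trans_lt (lt_min (by linarith) (Nat.lt_floor_add_one D))
    obtain ⟨g, hg⟩ := exists_lt_of_ciInf_lt hlt
    simp only [inv_one, one_mul, mul_one, max_lt_iff, lt_min_iff] at hg
    obtain ⟨⟨hd, -⟩, -, hn⟩ := hg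
    have hn' : wordNorm Ω g ≤ ⌊D⌋₊ := Nat.lt_succ_iff.1 (by exact_mod_cast hn)
    have hBg := le_csSup hbdd
      (Set.mem_image_of_mem B (show (wordNorm Ω g : ℝ) ≤ D from (Nat.le_floor_iff hD).1 hn'))
    have htri := dist_triangle_right x₁ x₂ (g • x₂)
    have hx := hB g x₂
    linarith
  have contr : ∀ x₁ x₂ : X, dbdd Ω (x₁, (1 : Γ)) (x₂, (1 : Γ)) ≤ dist x₁ x₂ := by
    intro x₁ x₂
    refine (ciInf_le ⟨0, ?_⟩ (1 : Γ)).trans (by simp [wordNorm_one])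
    rintro _ ⟨g, rfl⟩
    exact le_max_of_le_left dist_nonneg
  exact ⟨contr, key, ⟨id, fun r x₁ x₂ h => (contr x₁ x₂).trans h⟩,
    fun D hD => ⟨_, key D hD⟩⟩
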